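/- arXiv:2009.03677 — 6 statements merged into one kernel-verified Lean document; each statement's English description precedes it below -/
import Mathlib

section
/- (Remark 1 lower bound, zero-mean case) Let N ≥ 1, γ_0 > 0 and λ_1,…,λ_N > 0. Let μ be the product measure on ℝ^N of N copies of the standard Gaussian measure on ℝ. Then μ{z ∈ ℝ^N : ∑_{i=1}^N λ_i z_i² ≤ γ_0} ≥ π^{-N/2} ∏_{i=1}^N ∫_0^{γ_0/(2 N λ_i)} t^{-1/2} e^{-t} dt. -/
/-!
The box `{z | ∀ i, |z i| ≤ √(γ₀ / (N lam i))}` is contained in the sublevel set, since each of the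
`N` summands is then at most `γ₀ / N`. The product measure of the box is the product of the
one-dimensional Gaussian measures of the intervals `[-a, a]`, and the substitution `t = x² / 2`
turns each of them into `π^{-1/2} γ(1/2, a² / 2)` (`gaussianReal_Icc_neg_self`).
-/

open MeasureTheory ProbabilityTheory Finset Real

/-- The substitution `t = x² / 2` in the incomplete Gamma integral. -/
lemma incompleteGamma_half_eq (a : ℝ) (ha : 0 ≤ a) :
    ∫ t in (0:ℝ)..(a ^ 2 / 2), t ^ (-(1:ℝ)/2) * Real.exp (-t)
      = ∫ x in (0:ℝ)..a, √2 * Real.exp (-(x ^ 2 / 2)) := by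
  have h := intervalIntegral.integral_comp_mul_deriv_of_deriv_nonneg (a := 0) (b := a)
    (f := fun x : ℝ => x ^ 2 / 2) (f' := fun x => x)
    (g := fun t : ℝ => t ^ (-(1:ℝ)/2) * Real.exp (-t))
    (by fun_prop)
    (by
      intro x _
      have := (hasDerivAt_pow 2 x).div_const 2
      simpa using this)
    (by
      intro x hx
      rw [min_eq_left ha] at hx
      exact hx.1.le)
  have h0 : ((0:ℝ) ^ 2 / 2) = 0 := by norm_num
  simp only [h0] at h
  rw [← h]
  apply intervalIntegral.integral_congr_ae
  refine Filter.Eventually.of_forall fun x hx => ?_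
  rw [Set.uIoc_of_le ha] at hx
  have hx0 : 0 < x := hx.1
  have hs : (x ^ 2 / 2) ^ (-(1:ℝ)/2) = √2 / x := by
    rw [neg_div, Real.rpow_neg (by positivity), ← Real.sqrt_eq_rpow,
      Real.sqrt_div (by positivity), Real.sqrt_sq hx0.le, inv_div]
  simp only [Function.comp_apply, hs]
  field_simp

lemma gaussianReal_Icc_neg_self (a : ℝ) (ha : 0 ≤ a) :
    gaussianReal 0 1 (Set.Icc (-a) a)
      = ENNReal.ofReal ((√Real.pi)⁻¹ *
          ∫ t in (0:ℝ)..(a ^ 2 / 2), t ^ (-(1:ℝ)/2) * Real.exp (-t)) := by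
  have hpdf : ∀ x, gaussianPDFReal 0 1 x = (√(2 * Real.pi))⁻¹ * Real.exp (-(x ^ 2 / 2)) := by
    intro x
    simp [gaussianPDFReal, neg_div]
  have hint : ∀ c d : ℝ, IntervalIntegrable (gaussianPDFReal 0 1) volume c d := fun c d =>
    (integrable_gaussianPDFReal 0 1).intervalIntegrable
  have hsymm : ∫ x in (-a)..0, gaussianPDFReal 0 1 x = ∫ x in (0:ℝ)..a, gaussianPDFReal 0 1 x := by
    have := intervalIntegral.integral_comp_neg (a := 0) (b := a) (gaussianPDFReal 0 1)
    rw [neg_zero] at this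
    rw [← this]
    simp [hpdf]
  rw [gaussianReal_apply_eq_integral 0 one_ne_zero, MeasureTheory.integral_Icc_eq_integral_Ioc,
    ← intervalIntegral.integral_of_le (by linarith),
    ← intervalIntegral.integral_add_adjacent_intervals (hint _ 0) (hint _ _), hsymm,
    incompleteGamma_half_eq a ha]
  congr 1
  simp_rw [hpdf, intervalIntegral.integral_const_mul]
  have h2 : √2 * √2 = (2:ℝ) := Real.mul_self_sqrt (by norm_num)
  have hπ : √Real.pi ≠ 0 := by positivity
  rw [Real.sqrt_mul (by norm_num)]
  field_simp
  linear_combination (-(∫ x in (0:ℝ)..a, Real.exp (-(x ^ 2 / 2)))) * h2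

/-- Remark 1 lower bound, zero-mean case: the left tail of
`∑ i, lam i * z i ²` under the product of `N` standard Gaussians is bounded
below by `π^{-N/2} ∏ i γ(1/2, γ₀/(2 N lam i))`, where
`γ(1/2, x) = ∫ t in (0, x), t^{-1/2} e^{-t} dt` is the lower incomplete Gamma
function. -/
theorem left_tail_lower_bound_zero_mean
    (N : ℕ) (hN : 1 ≤ N) (γ₀ : ℝ) (hγ₀ : 0 < γ₀)
    (lam : Fin N → ℝ) (hlam : ∀ i, 0 < lam i) :
    (Measure.pi fun _ : Fin N => gaussianReal 0 1)
      {z : Fin N → ℝ | ∑ i, lam i * z i ^ 2 ≤ γ₀}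
      ≥ ENNReal.ofReal (Real.pi ^ (-(N : ℝ) / 2)
          * ∏ i, ∫ t in (0:ℝ)..(γ₀ / (2 * N * lam i)), t ^ (-(1:ℝ)/2) * Real.exp (-t)) := by
  have hN0 : (0:ℝ) < N := by exact_mod_cast hN
  have hpos : ∀ i, 0 ≤ γ₀ / (N * lam i) := fun i => by
    have := hlam i
    positivity
  let a : Fin N → ℝ := fun i => √(γ₀ / (N * lam i))
  have ha : ∀ i, a i ^ 2 = γ₀ / (N * lam i) := fun i => Real.sq_sqrt (hpos i)
  have hbox : Set.univ.pi (fun i => Set.Icc (-a i) (a i))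
      ⊆ {z : Fin N → ℝ | ∑ i, lam i * z i ^ 2 ≤ γ₀} := by
    intro z hz
    have hterm : ∀ i ∈ Finset.univ, lam i * z i ^ 2 ≤ γ₀ / N := by
      intro i _
      have hi := hz i (Set.mem_univ i)
      have hl := hlam i
      have hsq : z i ^ 2 ≤ γ₀ / (N * lam i) := by
        rw [← ha i]
        exact sq_le_sq' hi.1 hi.2
      calc lam i * z i ^ 2 ≤ lam i * (γ₀ / (N * lam i)) := by gcongr
        _ = γ₀ / N := by field_simp
    calc ∑ i, lam i * z i ^ 2 ≤ ∑ _i : Fin N, γ₀ / N := Finset.sum_le_sum hterm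
      _ = γ₀ := by
        simp only [Finset.sum_const, Finset.card_univ, Fintype.card_fin, nsmul_eq_mul]
        field_simp
  refine le_trans (le_of_eq ?_) (measure_mono hbox)
  have hconst : Real.pi ^ (-(N : ℝ) / 2) = ∏ _i : Fin N, (√Real.pi)⁻¹ := by
    rw [Finset.prod_const, Finset.card_univ, Fintype.card_fin, Real.sqrt_eq_rpow,
      ← Real.rpow_neg Real.pi_pos.le, ← Real.rpow_natCast, ← Real.rpow_mul Real.pi_pos.le]
    congr 1
    ring
  have hlim : ∀ i, γ₀ / (2 * N * lam i) = a i ^ 2 / 2 := fun i => by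
    rw [ha i]
    have := hlam i
    field_simp
  rw [Measure.pi_pi, hconst, ← Finset.prod_mul_distrib, ENNReal.ofReal_prod_of_nonneg]
  · refine Finset.prod_congr rfl fun i _ => ?_
    rw [gaussianReal_Icc_neg_self (a i) (Real.sqrt_nonneg _), hlim]
  · intro i _
    rw [hlim, incompleteGamma_half_eq (a i) (Real.sqrt_nonneg _)]
    refine mul_nonneg (by positivity) ?_
    exact intervalIntegral.integral_nonneg (Real.sqrt_nonneg _) fun x _ => by positivity
end

section
/- (Pointwise bound on the likelihood ratio over the rare event) Let N ≥ 1, γ_0 > 0, λ_1,…,λ_N > 0 and α_1,…,α_N ∈ ℝ. Set σ_i = √(γ_0/(N λ_i)). For x ∈ ℝ let f(x) = (1/√(2π)) e^{-x²/2} and f*_i(x) = (1/(√(2π) σ_i)) e^{-(x+α_i)²/(2σ_i²)}. Then for every z ∈ ℝ^N with ∑_{i=1}^N λ_i (z_i + α_i)² ≤ γ_0, one has ∏_{i=1}^N f(z_i)/f*_i(z_i) ≤ (γ_0/N)^{N/2} (∏_{i=1}^N λ_i^{-1/2}) e^{N/2}. -/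
/-!
Each factor equals `σ i * exp (-z i ^ 2 / 2 + (z i + α i) ^ 2 / (2 σ i ^ 2))`. Dropping the
nonpositive term `-z i ^ 2 / 2` and using `1 / σ i ^ 2 = N lam i / γ₀` bounds it by
`σ i * exp (N / (2 γ₀) * (lam i (z i + α i) ^ 2))`. In the product the exponents add up to
`N / (2 γ₀)` times the quadratic form defining the event, hence to at most `N / 2`, while
`∏ i, σ i` is exactly the prefactor of the claim.
-/

open Finset Real

/-- Pointwise bound on the likelihood ratio over the rare event:
with `σ i = √(γ₀/(N lam i))`, on the event `∑ i, lam i (z i + α i)² ≤ γ₀` the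
likelihood ratio is bounded by `(γ₀/N)^{N/2} (∏ i lam i^{-1/2}) e^{N/2}`. -/
theorem likelihood_ratio_bound_on_event
    (N : ℕ) (hN : 1 ≤ N) (γ₀ : ℝ) (hγ₀ : 0 < γ₀)
    (lam : Fin N → ℝ) (hlam : ∀ i, 0 < lam i) (α : Fin N → ℝ)
    (σ : Fin N → ℝ) (hσ : ∀ i, σ i = Real.sqrt (γ₀ / (N * lam i)))
    (f : ℝ → ℝ) (hf : ∀ x, f x = (1 / Real.sqrt (2 * Real.pi)) * Real.exp (-x ^ 2 / 2))
    (fstar : Fin N → ℝ → ℝ)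
    (hfstar : ∀ i x, fstar i x
      = (1 / (Real.sqrt (2 * Real.pi) * σ i)) * Real.exp (-(x + α i) ^ 2 / (2 * σ i ^ 2))) :
    ∀ z : Fin N → ℝ, (∑ i, lam i * (z i + α i) ^ 2 ≤ γ₀) →
      ∏ i, f (z i) / fstar i (z i)
        ≤ (γ₀ / N) ^ ((N : ℝ) / 2) * (∏ i, (lam i) ^ (-(1:ℝ)/2))
            * Real.exp ((N : ℝ) / 2) := by
  intro z hz
  have hNpos : (0 : ℝ) < N := by exact_mod_cast hN
  have hσpos : ∀ i, 0 < σ i := fun i => by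
    have := hlam i
    rw [hσ i]
    positivity
  have hσsq : ∀ i, σ i ^ 2 = γ₀ / (N * lam i) := fun i => by
    have := hlam i
    rw [hσ i, Real.sq_sqrt (by positivity)]
  have hσsplit : ∀ i, σ i = (γ₀ / N) ^ ((1 : ℝ) / 2) * lam i ^ (-(1 : ℝ) / 2) := fun i => by
    rw [hσ i, ← div_div, Real.sqrt_eq_rpow, Real.div_rpow (by positivity) (hlam i).le, neg_div,
      Real.rpow_neg (hlam i).le, div_eq_mul_inv]
  have hfactor : ∀ i, f (z i) / fstar i (z i)
      = σ i * Real.exp (-z i ^ 2 / 2 + (z i + α i) ^ 2 / (2 * σ i ^ 2)) := fun i => by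
    have := hσpos i
    have hpi : 0 < Real.sqrt (2 * Real.pi) := by positivity
    rw [hf, hfstar, neg_div (2 * σ i ^ 2), Real.exp_neg, Real.exp_add]
    field_simp
  have hbound : ∀ i, f (z i) / fstar i (z i)
      ≤ σ i * Real.exp (N / (2 * γ₀) * (lam i * (z i + α i) ^ 2)) := fun i => by
    have hl := hlam i
    have hexp : (z i + α i) ^ 2 / (2 * σ i ^ 2) = N / (2 * γ₀) * (lam i * (z i + α i) ^ 2) := by
      rw [hσsq i]
      field_simp
    rw [hfactor i, hexp]
    refine mul_le_mul_of_nonneg_left (Real.exp_le_exp.2 ?_) (hσpos i).le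
    linarith [sq_nonneg (z i)]
  have hprod : ∏ i, σ i = (γ₀ / N) ^ ((N : ℝ) / 2) * ∏ i, lam i ^ (-(1 : ℝ) / 2) := by
    rw [Finset.prod_congr rfl fun i _ => hσsplit i, Finset.prod_mul_distrib, Finset.prod_const,
      Finset.card_univ, Fintype.card_fin, ← Real.rpow_mul_natCast (by positivity)]
    congr 2
    ring
  calc ∏ i, f (z i) / fstar i (z i)
      ≤ ∏ i, σ i * Real.exp (N / (2 * γ₀) * (lam i * (z i + α i) ^ 2)) := by
        refine Finset.prod_le_prod (fun i _ => ?_) fun i _ => hbound i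
        rw [hfactor i]
        exact mul_nonneg (hσpos i).le (Real.exp_pos _).le
    _ = (∏ i, σ i) * Real.exp (N / (2 * γ₀) * ∑ i, lam i * (z i + α i) ^ 2) := by
        rw [Finset.prod_mul_distrib, Finset.mul_sum, Real.exp_sum]
    _ ≤ (∏ i, σ i) * Real.exp ((N : ℝ) / 2) := by
        refine mul_le_mul_of_nonneg_left (Real.exp_le_exp.2 ?_)
          (Finset.prod_nonneg fun i _ => (hσpos i).le)
        calc N / (2 * γ₀) * ∑ i, lam i * (z i + α i) ^ 2
            ≤ N / (2 * γ₀) * γ₀ := mul_le_mul_of_nonneg_left hz (by positivity)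
          _ = (N : ℝ) / 2 := by field_simp
    _ = _ := by rw [hprod]
end

section
/- (Second moment bound for the IS estimator) Let N ≥ 1, γ_0 > 0, λ_1,…,λ_N > 0 and α_1,…,α_N ∈ ℝ. Set σ_i = √(γ_0/(N λ_i)), let f(x) = (1/√(2π)) e^{-x²/2}, f*_i(x) = (1/(√(2π) σ_i)) e^{-(x+α_i)²/(2σ_i²)}, L(z) = ∏_{i=1}^N f(z_i)/f*_i(z_i), and let μ* be the product measure on ℝ^N whose i-th factor is the Gaussian measure with mean −α_i and variance σ_i². Then ∫_{ℝ^N} 𝟙{∑_{i=1}^N λ_i (z_i + α_i)² ≤ γ_0} · L(z)² dμ*(z) ≤ (γ_0/N)^N (∏_{i=1}^N λ_i^{-1}) e^N. -/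
/-!
The bound already holds pointwise. Each factor of the likelihood ratio satisfies
`(f x / f*ᵢ x)² = σᵢ² exp (-x² + (x + αᵢ)² / σᵢ²) ≤ σᵢ² exp (N λᵢ (x + αᵢ)² / γ₀)`
because `σᵢ² = γ₀ / (N λᵢ)`. Multiplying over `i`, on the event `∑ λᵢ (zᵢ + αᵢ)² ≤ γ₀` the total
exponent is at most `N`, so `L² ≤ ∏ σᵢ² · e^N`. Integrating this constant against a probability
measure gives the claim.
-/

open MeasureTheory ProbabilityTheory Finset Real

/-- Second moment bound for the IS estimator: with
`σ i = √(γ₀/(N lam i))` and `μ*` the product of the Gaussians with mean `-α i`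
and variance `σ i ^ 2`, the second moment of the IS estimator satisfies
`∫ 𝟙{S_N ≤ γ₀} L² dμ* ≤ (γ₀/N)^N (∏ i lam i⁻¹) e^N`. -/
theorem second_moment_bound
    (N : ℕ) (hN : 1 ≤ N) (γ₀ : ℝ) (hγ₀ : 0 < γ₀)
    (lam : Fin N → ℝ) (hlam : ∀ i, 0 < lam i) (α : Fin N → ℝ)
    (σ : Fin N → ℝ) (hσ : ∀ i, σ i = Real.sqrt (γ₀ / (N * lam i)))
    (f : ℝ → ℝ) (hf : ∀ x, f x = (1 / Real.sqrt (2 * Real.pi)) * Real.exp (-x ^ 2 / 2))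
    (fstar : Fin N → ℝ → ℝ)
    (hfstar : ∀ i x, fstar i x
      = (1 / (Real.sqrt (2 * Real.pi) * σ i)) * Real.exp (-(x + α i) ^ 2 / (2 * σ i ^ 2)))
    (L : (Fin N → ℝ) → ℝ) (hL : ∀ z, L z = ∏ i, f (z i) / fstar i (z i)) :
    (∫ z : Fin N → ℝ,
        Set.indicator {y : Fin N → ℝ | ∑ i, lam i * (y i + α i) ^ 2 ≤ γ₀}
          (fun y => L y ^ 2) z
        ∂(Measure.pi fun i : Fin N => gaussianReal (-α i) ((σ i ^ 2).toNNReal)))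
      ≤ (γ₀ / N) ^ N * (∏ i, (lam i)⁻¹) * Real.exp N := by
  have hN' : (0 : ℝ) < N := by exact_mod_cast hN
  have hσ2 : ∀ i, σ i ^ 2 = γ₀ / N * (lam i)⁻¹ := fun i => by
    have := hlam i
    rw [hσ, Real.sq_sqrt (by positivity)]
    field_simp
  have hσpos : ∀ i, 0 < σ i := fun i => by
    have := hlam i
    rw [hσ]
    positivity
  have hratio : ∀ i x, (f x / fstar i x) ^ 2
      ≤ γ₀ / N * (lam i)⁻¹ * Real.exp (N / γ₀ * (lam i * (x + α i) ^ 2)) := fun i x => by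
    have h1 := hσpos i
    have h2 := hlam i
    have hpi : 0 < Real.sqrt (2 * Real.pi) := by positivity
    have hquot : f x / fstar i x
        = σ i * Real.exp (-x ^ 2 / 2 + (x + α i) ^ 2 / (2 * σ i ^ 2)) := by
      rw [hf, hfstar, Real.exp_add, neg_div (2 * σ i ^ 2), Real.exp_neg ((x + α i) ^ 2 / _)]
      field_simp
    rw [hquot, mul_pow, ← Real.exp_nat_mul, ← hσ2]
    refine mul_le_mul_of_nonneg_left (Real.exp_le_exp.2 ?_) (sq_nonneg _)
    have hexp : (x + α i) ^ 2 / (2 * σ i ^ 2) = N / γ₀ * (lam i * (x + α i) ^ 2) / 2 := by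
      rw [hσ2]
      field_simp
    rw [hexp]
    push_cast
    nlinarith [sq_nonneg x]
  have hprod : (γ₀ / N) ^ N * (∏ i, (lam i)⁻¹) = ∏ i, (γ₀ / N * (lam i)⁻¹) := by
    rw [Finset.prod_mul_distrib, Finset.prod_const, Finset.card_univ, Fintype.card_fin]
  have hC : 0 ≤ (γ₀ / N) ^ N * (∏ i, (lam i)⁻¹) := by
    rw [hprod]
    exact Finset.prod_nonneg fun i _ => by have := hlam i; positivity
  have hbound : ∀ z : Fin N → ℝ,
      ‖Set.indicator {y : Fin N → ℝ | ∑ i, lam i * (y i + α i) ^ 2 ≤ γ₀}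
          (fun y => L y ^ 2) z‖ ≤ (γ₀ / N) ^ N * (∏ i, (lam i)⁻¹) * Real.exp N := fun z => by
    by_cases hz : ∑ i, lam i * (z i + α i) ^ 2 ≤ γ₀
    · rw [Set.indicator_of_mem (by exact hz), Real.norm_of_nonneg (sq_nonneg _), hL,
        ← Finset.prod_pow]
      refine (Finset.prod_le_prod (fun i _ => sq_nonneg _) fun i _ => hratio i (z i)).trans ?_
      rw [Finset.prod_mul_distrib, ← Real.exp_sum, ← Finset.mul_sum, ← hprod]
      refine mul_le_mul_of_nonneg_left (Real.exp_le_exp.2 ?_) hC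
      calc N / γ₀ * ∑ i, lam i * (z i + α i) ^ 2 ≤ N / γ₀ * γ₀ := by gcongr
        _ = N := by field_simp
    · rw [Set.indicator_of_notMem (by exact hz), norm_zero]
      positivity
  -- The biased measure is a probability measure, so the uniform bound passes to the integral.
  have h := norm_integral_le_of_norm_le_const
    (μ := Measure.pi fun i : Fin N => gaussianReal (-α i) ((σ i ^ 2).toNNReal))
    (Filter.Eventually.of_forall hbound)
  rw [probReal_univ, mul_one] at h
  exact (le_abs_self _).trans h
end

section
/- (Proposition 2: bounded relative error of the IS estimator) Let N ≥ 1, λ_1,…,λ_N > 0 and α_1,…,α_N ∈ ℝ. For each γ_0 > 0 set σ_i(γ_0) = √(γ_0/(N λ_i)), let μ*_{γ_0} be the product measure on ℝ^N whose i-th factor is the Gaussian measure with mean −α_i and variance σ_i(γ_0)², let L_{γ_0}(z) = ∏_{i=1}^N f(z_i)/f*_{i,γ_0}(z_i) be the corresponding likelihood ratio with respect to the product of standard Gaussian densities f, let P(γ_0) = μ{z : ∑_i λ_i (z_i + α_i)² ≤ γ_0} where μ is the product of N standard Gaussian measures, and let M_2(γ_0) = ∫_{ℝ^N} 𝟙{∑_i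 λ_i (z_i + α_i)² ≤ γ_0} L_{γ_0}(z)² dμ*_{γ_0}(z). Then limsup_{γ_0 → 0⁺} M_2(γ_0)/P(γ_0)² < +∞. -/
/-!
Write `A = ∏ i, σ i`. On the event `∑ i, lam i * (z i + α i) ^ 2 ≤ γ₀` the choice
`σ i ^ 2 = γ₀ / (N * lam i)` makes the exponents `(z i + α i) ^ 2 / (2 * σ i ^ 2)` sum to at most
`N / 2`, so the likelihood ratio is at most `A * exp (N / 2)` and the second moment is at most
`A ^ 2 * exp N` (`likelihood_factor`, `exponent_sum_le`). Conversely the event contains the box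
`∏ i, [-α i - σ i, -α i + σ i]`, and for `γ₀ ≤ 1` the standard Gaussian density is bounded below on
each of these sides by a constant independent of `γ₀`, so the probability is at least `A * C` with
`C > 0` fixed (`gaussian_Icc_lower`). Hence the ratio is at most `exp N / C ^ 2` for `γ₀ ∈ (0, 1)`.
-/

open MeasureTheory ProbabilityTheory Finset Real Filter

/-- An interval of half-width `s ≤ S` around `-a` has standard Gaussian mass at least its length
times the smallest value the density takes within distance `S` of `-a`. -/
lemma gaussian_Icc_lower (a s S : ℝ) (hS : s ≤ S) :
    ENNReal.ofReal (s * (2 * ((√(2 * π))⁻¹ * rexp (-(|a| + S) ^ 2 / 2)))) ≤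
      gaussianReal 0 1 (Set.Icc (-a - s) (-a + s)) := by
  rw [gaussianReal_apply 0 one_ne_zero]
  calc ENNReal.ofReal (s * (2 * ((√(2 * π))⁻¹ * rexp (-(|a| + S) ^ 2 / 2))))
      = ∫⁻ _ in Set.Icc (-a - s) (-a + s),
          ENNReal.ofReal ((√(2 * π))⁻¹ * rexp (-(|a| + S) ^ 2 / 2)) := by
        rw [setLIntegral_const, Real.volume_Icc, ← ENNReal.ofReal_mul (by positivity)]
        congr 1
        ring
    _ ≤ _ := by
        apply setLIntegral_mono (measurable_gaussianPDF 0 1)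
        intro x hx
        rw [gaussianPDF]
        apply ENNReal.ofReal_le_ofReal
        rw [gaussianPDFReal]
        simp only [NNReal.coe_one, mul_one, sub_zero]
        have hx' : |x| ≤ |a| + S := by
          rw [abs_le]
          constructor <;> linarith [hx.1, hx.2, le_abs_self a, neg_abs_le a]
        have hsq : x ^ 2 ≤ (|a| + S) ^ 2 := sq_le_sq' (abs_le.1 hx').1 (abs_le.1 hx').2
        gcongr

lemma likelihood_factor (x a s : ℝ) (hs : 0 < s) :
    1 / √(2 * π) * rexp (-x ^ 2 / 2) /
        (1 / (√(2 * π) * s) * rexp (-(x + a) ^ 2 / (2 * s ^ 2))) ≤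
      s * rexp ((x + a) ^ 2 / (2 * s ^ 2)) := by
  have hpi : 0 < √(2 * π) := by positivity
  have h1 : rexp (-x ^ 2 / 2) ≤ 1 := Real.exp_le_one_iff.2 (by nlinarith [sq_nonneg x])
  rw [neg_div, neg_div, Real.exp_neg ((x + a) ^ 2 / (2 * s ^ 2)), ← neg_div]
  have h2 := Real.exp_pos ((x + a) ^ 2 / (2 * s ^ 2))
  calc _ = (s * rexp ((x + a) ^ 2 / (2 * s ^ 2))) * rexp (-x ^ 2 / 2) := by
        field_simp
    _ ≤ _ := mul_le_of_le_one_right (by positivity) h1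

lemma exponent_sum_le (N : ℕ) (hN : 1 ≤ N) (lam α z s : Fin N → ℝ) (hlam : ∀ i, 0 < lam i)
    (g : ℝ) (hg : 0 < g) (hs : ∀ i, s i ^ 2 = g / (N * lam i))
    (hz : ∑ i, lam i * (z i + α i) ^ 2 ≤ g) :
    ∑ i, (z i + α i) ^ 2 / (2 * s i ^ 2) ≤ (N : ℝ) / 2 := by
  have hN' : (0 : ℝ) < N := by exact_mod_cast hN
  calc ∑ i, (z i + α i) ^ 2 / (2 * s i ^ 2)
      = ∑ i, (N / (2 * g)) * (lam i * (z i + α i) ^ 2) := by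
        refine Finset.sum_congr rfl fun i _ => ?_
        have := hlam i
        rw [hs]
        field_simp
    _ ≤ (N / (2 * g)) * g := by
        rw [← Finset.mul_sum]
        gcongr
    _ = N / 2 := by field_simp

/-- Proposition 2: bounded relative error of the IS estimator:
with biasing variances `σ i (γ₀)² = γ₀/(N lam i)`, the ratio of the second
moment `M₂(γ₀)` of the IS estimator to the squared left-tail probability
`P(γ₀)²` has finite limsup as `γ₀ → 0⁺`. -/
theorem bounded_relative_error
    (N : ℕ) (hN : 1 ≤ N)
    (lam : Fin N → ℝ) (hlam : ∀ i, 0 < lam i) (α : Fin N → ℝ)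
    (σ : ℝ → Fin N → ℝ) (hσ : ∀ γ₀ i, σ γ₀ i = Real.sqrt (γ₀ / (N * lam i)))
    (f : ℝ → ℝ) (hf : ∀ x, f x = (1 / Real.sqrt (2 * Real.pi)) * Real.exp (-x ^ 2 / 2))
    (fstar : ℝ → Fin N → ℝ → ℝ)
    (hfstar : ∀ γ₀ i x, fstar γ₀ i x
      = (1 / (Real.sqrt (2 * Real.pi) * σ γ₀ i))
          * Real.exp (-(x + α i) ^ 2 / (2 * σ γ₀ i ^ 2)))
    (L : ℝ → (Fin N → ℝ) → ℝ)
    (hL : ∀ γ₀ z, L γ₀ z = ∏ i, f (z i) / fstar γ₀ i (z i))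
    (P : ℝ → ENNReal)
    (hP : ∀ γ₀, P γ₀ = (Measure.pi fun _ : Fin N => gaussianReal 0 1)
        {z : Fin N → ℝ | ∑ i, lam i * (z i + α i) ^ 2 ≤ γ₀})
    (M₂ : ℝ → ENNReal)
    (hM₂ : ∀ γ₀, M₂ γ₀ = ∫⁻ z : Fin N → ℝ,
        Set.indicator {y : Fin N → ℝ | ∑ i, lam i * (y i + α i) ^ 2 ≤ γ₀}
          (fun y => ENNReal.ofReal (L γ₀ y ^ 2)) z
        ∂(Measure.pi fun i : Fin N => gaussianReal (-α i) ((σ γ₀ i ^ 2).toNNReal))) :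
    Filter.limsup (fun γ₀ => M₂ γ₀ / (P γ₀) ^ 2) (nhdsWithin 0 (Set.Ioi 0)) < ⊤ := by
  have hN' : (0 : ℝ) < N := by exact_mod_cast hN
  set C : ℝ := ∏ i, (2 * ((√(2 * π))⁻¹ * rexp (-(|α i| + σ 1 i) ^ 2 / 2))) with hC
  have hCpos : 0 < C := Finset.prod_pos fun i _ => by positivity
  refine lt_of_le_of_lt (Filter.limsup_le_of_le (a := ENNReal.ofReal (rexp N / C ^ 2))
    (by isBoundedDefault) ?_) ENNReal.ofReal_lt_top
  filter_upwards [Ioo_mem_nhdsGT (zero_lt_one (α := ℝ))] with g hg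
  obtain ⟨hg0, hg1⟩ := hg
  have hσpos : ∀ i, 0 < σ g i := fun i => by
    have := hlam i
    rw [hσ]
    positivity
  have hσsq : ∀ i, σ g i ^ 2 = g / (N * lam i) := fun i => by
    have := hlam i
    rw [hσ, Real.sq_sqrt (by positivity)]
  have hσle : ∀ i, σ g i ≤ σ 1 i := fun i => by
    have := hlam i
    rw [hσ, hσ]
    gcongr
  set A : ℝ := ∏ i, σ g i with hA
  have hApos : 0 < A := Finset.prod_pos fun i _ => hσpos i
  have hM : M₂ g ≤ ENNReal.ofReal (A ^ 2 * rexp N) := by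
    rw [hM₂]
    calc _ ≤ ∫⁻ _ : Fin N → ℝ, ENNReal.ofReal (A ^ 2 * rexp N)
          ∂(Measure.pi fun i : Fin N => gaussianReal (-α i) ((σ g i ^ 2).toNNReal)) := by
          refine lintegral_mono (Set.indicator_le' (fun y hy => ?_) (fun _ _ => zero_le))
          apply ENNReal.ofReal_le_ofReal
          have hnn : ∀ i, 0 ≤ f (y i) / fstar g i (y i) := fun i => by
            have := hσpos i
            rw [hf, hfstar]
            positivity
          have hL0 : 0 ≤ L g y := by
            rw [hL]
            exact Finset.prod_nonneg fun i _ => hnn i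
          have hL1 : L g y ≤ A * rexp (N / 2) := by
            rw [hL]
            calc _ ≤ ∏ i, σ g i * rexp ((y i + α i) ^ 2 / (2 * σ g i ^ 2)) := by
                  refine Finset.prod_le_prod (fun i _ => hnn i) fun i _ => ?_
                  rw [hf, hfstar]
                  exact likelihood_factor _ _ _ (hσpos i)
              _ = A * rexp (∑ i, (y i + α i) ^ 2 / (2 * σ g i ^ 2)) := by
                  rw [Finset.prod_mul_distrib, Real.exp_sum]
              _ ≤ _ := by
                  gcongr
                  exact exponent_sum_le N hN lam α y (σ g) hlam g hg0 hσsq hy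
          calc L g y ^ 2 ≤ (A * rexp (N / 2)) ^ 2 := by gcongr
            _ = A ^ 2 * rexp N := by
                rw [mul_pow, ← Real.exp_nat_mul]
                congr 2
                push_cast
                ring
      _ = _ := by simp
  have hPl : ENNReal.ofReal (A * C) ≤ P g := by
    rw [hP, hA, hC, ← Finset.prod_mul_distrib,
      ENNReal.ofReal_prod_of_nonneg fun i _ => by have := hσpos i; positivity]
    calc _ ≤ ∏ i, gaussianReal 0 1 (Set.Icc (-α i - σ g i) (-α i + σ g i)) :=
          Finset.prod_le_prod' fun i _ =>
            gaussian_Icc_lower (α i) (σ g i) (σ 1 i) (hσle i)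
      _ = (Measure.pi fun _ : Fin N => gaussianReal 0 1)
            (Set.univ.pi fun i => Set.Icc (-α i - σ g i) (-α i + σ g i)) :=
          (Measure.pi_pi _ _).symm
      _ ≤ _ := by
          refine measure_mono fun z hz => ?_
          have hterm : ∀ i, lam i * (z i + α i) ^ 2 ≤ g / N := fun i => by
            have hi := hz i (Set.mem_univ i)
            have hl := hlam i
            have hsq : (z i + α i) ^ 2 ≤ σ g i ^ 2 :=
              sq_le_sq' (by linarith [hi.1]) (by linarith [hi.2])
            calc lam i * (z i + α i) ^ 2 ≤ lam i * σ g i ^ 2 := by gcongr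
              _ = g / N := by
                  rw [hσsq]
                  field_simp
          calc ∑ i, lam i * (z i + α i) ^ 2 ≤ ∑ _i : Fin N, g / N :=
                Finset.sum_le_sum fun i _ => hterm i
            _ = g := by
                simp only [Finset.sum_const, Finset.card_univ, Fintype.card_fin, nsmul_eq_mul]
                field_simp
  calc M₂ g / P g ^ 2
      ≤ ENNReal.ofReal (A ^ 2 * rexp N) / ENNReal.ofReal (A * C) ^ 2 := by gcongr
    _ = ENNReal.ofReal (rexp N / C ^ 2) := by
        rw [← ENNReal.ofReal_pow (by positivity), ← ENNReal.ofReal_div_of_pos (by positivity)]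
        congr 1
        field_simp
end

section
/- (Asymptotic lower bound on the left tail, zero-mean case) Let N ≥ 1 and λ_1,…,λ_N > 0, and let μ be the product measure on ℝ^N of N standard Gaussian measures. Define P(γ_0) = μ{z ∈ ℝ^N : ∑_{i=1}^N λ_i z_i² ≤ γ_0}. Then liminf_{γ_0 → 0⁺} γ_0^{-N/2} P(γ_0) ≥ (2/(N π))^{N/2} ∏_{i=1}^N λ_i^{-1/2}. Equivalently, for every c < (2/(Nπ))^{N/2} ∏_i λ_i^{-1/2} there exists γ̄ > 0 such that P(γ_0) ≥ c γ_0^{N/2} for all 0 < γ_0 < γ̄, i.e. 1/P(γ_0)² ≤ (1/c²) γ_0^{-N} asymptotically, matching the paper's bound 1/P² ≤ (Nπ/2)^N (∏_i λ_i) γ_0^{-N} as γ_0 → 0. -/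
/-!
The ellipsoid `∑ i, lam i * z i ^ 2 ≤ γ` contains the box `|z i| ≤ √(γ / (N * lam i))`, whose
Gaussian measure is a product of one-dimensional ones. On `[-r, r]` the standard Gaussian density
is at least its value at `r`, so each factor is at least `2 r e^{-r²/2} / √(2π)`. With
`r = √(γ / (N * lam i))` the product of these bounds is `γ^{N/2}` times the claimed constant times
`exp (-γ ∑ i, 1 / (2 * N * lam i))`, and the last factor tends to `1` as `γ → 0⁺`.
-/

open MeasureTheory ProbabilityTheory Finset Real Filter

lemma gaussianReal_Icc_lower (r : ℝ) :
    ENNReal.ofReal (gaussianPDFReal 0 1 r * (2 * r))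
      ≤ gaussianReal 0 1 (Set.Icc (-r) r) := by
  rw [gaussianReal_apply 0 one_ne_zero]
  calc ENNReal.ofReal (gaussianPDFReal 0 1 r * (2 * r))
      = ∫⁻ _ in Set.Icc (-r) r, gaussianPDF 0 1 r := by
        rw [setLIntegral_const, Real.volume_Icc, gaussianPDF,
          ENNReal.ofReal_mul (gaussianPDFReal_nonneg 0 1 r)]
        congr 2
        ring
    _ ≤ ∫⁻ x in Set.Icc (-r) r, gaussianPDF 0 1 x := by
        refine setLIntegral_mono (measurable_gaussianPDF 0 1) fun x hx => ?_
        have hsq : x ^ 2 ≤ r ^ 2 := sq_le_sq' hx.1 hx.2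
        unfold gaussianPDF gaussianPDFReal
        refine ENNReal.ofReal_le_ofReal ?_
        simp only [sub_zero, NNReal.coe_one, mul_one]
        gcongr

/-- The one-dimensional bound at the half-width `√(g / (n * l))`, split into its power of `g`, its
constant and a correction that tends to `1` as `g → 0`. -/
lemma gaussianPDFReal_mul_width {n l g : ℝ} (hn : 0 < n) (hl : 0 < l) (hg : 0 < g) :
    gaussianPDFReal 0 1 √(g / (n * l)) * (2 * √(g / (n * l)))
      = g ^ ((1:ℝ)/2) * (2 / (n * π)) ^ ((1:ℝ)/2) * l ^ (-(1:ℝ)/2)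
        * Real.exp (-(1 / (2 * n * l)) * g) := by
  have hexp : -√(g / (n * l)) ^ 2 / 2 = -(1 / (2 * n * l)) * g := by
    rw [Real.sq_sqrt (by positivity)]
    field_simp
  have hl' : l ^ (-(1:ℝ)/2) = (√l)⁻¹ := by
    rw [neg_div, Real.rpow_neg hl.le, ← Real.sqrt_eq_rpow]
  simp only [gaussianPDFReal, sub_zero, NNReal.coe_one, mul_one]
  rw [hexp, hl', ← Real.sqrt_eq_rpow, ← Real.sqrt_eq_rpow, Real.sqrt_div hg.le,
    Real.sqrt_div zero_le_two, Real.sqrt_mul hn.le, Real.sqrt_mul hn.le, Real.sqrt_mul zero_le_two]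
  have h2 : √2 * √2 = (2:ℝ) := Real.mul_self_sqrt zero_le_two
  have := Real.sqrt_pos.2 hn
  have := Real.sqrt_pos.2 hl
  have := Real.sqrt_pos.2 Real.pi_pos
  field_simp
  linear_combination (-1 : ℝ) * h2

/-- Asymptotic lower bound on the left tail, zero-mean case:
`liminf_{γ₀ → 0⁺} γ₀^{-N/2} P(γ₀) ≥ (2/(N π))^{N/2} ∏ i lam i^{-1/2}`, where
`P(γ₀)` is the left-tail probability of `∑ i lam i * z i ^ 2` under the product
of `N` standard Gaussian measures. -/
theorem left_tail_asymptotic_lower_bound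
    (N : ℕ) (hN : 1 ≤ N)
    (lam : Fin N → ℝ) (hlam : ∀ i, 0 < lam i)
    (P : ℝ → ENNReal)
    (hP : ∀ γ₀, P γ₀ = (Measure.pi fun _ : Fin N => gaussianReal 0 1)
        {z : Fin N → ℝ | ∑ i, lam i * z i ^ 2 ≤ γ₀}) :
    Filter.liminf (fun γ₀ => ENNReal.ofReal (γ₀ ^ (-(N : ℝ) / 2)) * P γ₀)
        (nhdsWithin 0 (Set.Ioi 0))
      ≥ ENNReal.ofReal ((2 / (N * Real.pi)) ^ ((N : ℝ) / 2)
          * ∏ i, (lam i) ^ (-(1:ℝ)/2)) := by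
  have hN0 : (0:ℝ) < N := by exact_mod_cast hN
  set C : ℝ := (2 / (N * Real.pi)) ^ ((N : ℝ) / 2) * ∏ i, (lam i) ^ (-(1:ℝ)/2) with hC
  set K : ℝ := ∑ i, -(1 / (2 * N * lam i)) with hK
  have hlim : Tendsto (fun g : ℝ => ENNReal.ofReal (C * Real.exp (K * g)))
      (nhdsWithin 0 (Set.Ioi 0)) (nhds (ENNReal.ofReal C)) := by
    have hcont : Continuous fun g : ℝ => ENNReal.ofReal (C * Real.exp (K * g)) :=
      ENNReal.continuous_ofReal.comp (by fun_prop)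
    have := (hcont.tendsto 0).mono_left (nhdsWithin_le_nhds (s := Set.Ioi 0))
    simpa using this
  rw [ge_iff_le, ← hlim.liminf_eq]
  refine liminf_le_liminf ?_
  filter_upwards [self_mem_nhdsWithin] with g hg
  have hg : 0 < g := hg
  have hprod : C * Real.exp (K * g) = g ^ (-(N : ℝ) / 2) *
      ∏ i, (gaussianPDFReal 0 1 √(g / (N * lam i)) * (2 * √(g / (N * lam i)))) := by
    have hpow : ∀ x : ℝ, 0 ≤ x → (x ^ ((1:ℝ)/2)) ^ N = x ^ ((N:ℝ)/2) := fun x hx => by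
      rw [← Real.rpow_natCast, ← Real.rpow_mul hx]
      congr 1
      ring
    have hcancel : g ^ (-(N : ℝ) / 2) * g ^ ((N : ℝ) / 2) = 1 := by
      rw [← Real.rpow_add hg, neg_div, neg_add_cancel, Real.rpow_zero]
    rw [Finset.prod_congr rfl fun i _ => gaussianPDFReal_mul_width hN0 (hlam i) hg]
    simp only [Finset.prod_mul_distrib, Finset.prod_const, Finset.card_univ, Fintype.card_fin]
    rw [hpow g hg.le, hpow _ (by positivity), ← Real.exp_sum, ← Finset.sum_mul, ← hK, hC]
    linear_combination (-((2 / (N * Real.pi)) ^ ((N : ℝ) / 2) * (∏ i, (lam i) ^ (-(1:ℝ)/2))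
      * Real.exp (K * g))) * hcancel
  have hbox : (Set.univ.pi fun i : Fin N => Set.Icc (-√(g / (N * lam i))) √(g / (N * lam i)))
      ⊆ {z : Fin N → ℝ | ∑ i, lam i * z i ^ 2 ≤ g} := by
    intro z hz
    have hterm : ∀ i ∈ Finset.univ, lam i * z i ^ 2 ≤ g / N := fun i _ => by
      have hi := hz i (Set.mem_univ i)
      have hpos := hlam i
      have hsq : z i ^ 2 ≤ g / (N * lam i) := by
        rw [← Real.sq_sqrt (show 0 ≤ g / (N * lam i) by positivity)]
        exact sq_le_sq' hi.1 hi.2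
      calc lam i * z i ^ 2 ≤ lam i * (g / (N * lam i)) := by gcongr
        _ = g / N := by field_simp
    calc ∑ i, lam i * z i ^ 2 ≤ ∑ _i : Fin N, g / N := Finset.sum_le_sum hterm
      _ = g := by simp; field_simp
  rw [hprod, ENNReal.ofReal_mul (by positivity), hP]
  gcongr
  refine le_trans ?_ (measure_mono hbox)
  rw [Measure.pi_pi, ENNReal.ofReal_prod_of_nonneg fun i _ =>
    mul_nonneg (gaussianPDFReal_nonneg 0 1 _) (by positivity)]
  exact Finset.prod_le_prod' fun i _ => gaussianReal_Icc_lower _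
end

section
/- (Scaled second-moment bound) Let N ≥ 1, λ_1,…,λ_N > 0 and α_1,…,α_N ∈ ℝ. For each γ_0 > 0 set σ_i(γ_0) = √(γ_0/(N λ_i)), let μ*_{γ_0} be the product measure on ℝ^N whose i-th factor is the Gaussian measure with mean −α_i and variance σ_i(γ_0)², let L_{γ_0}(z) = ∏_{i=1}^N f(z_i)/f*_{i,γ_0}(z_i) with f the standard Gaussian density and f*_{i,γ_0} the density of the i-th factor of μ*_{γ_0}, and let M_2(γ_0) = ∫_{ℝ^N} 𝟙{∑_i λ_i (z_i + α_i)² ≤ γ_0} L_{γ_0}(z)² dμ*_{γ_0}(z). Then for all γ_0 > 0, γ_0^{-N} M_2(γ_0) ≤ N^{-N} (∏_{i=1}^N λ_i^{-1}) e^N; in particular M_2(γ_0) → 0 as γ_0 → 0⁺ at rate O(γ_0^N). -/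
/-!
Writing `σ i² = γ₀ / (N lam i)`, each squared factor of the likelihood ratio is
`σ i² * exp (-z i²) * exp ((z i + α i)² / σ i²)`, hence at most
`γ₀ / (N lam i) * exp (N lam i (z i + α i)² / γ₀)` (`sq_density_ratio_le`). On the event
`∑ i, lam i (z i + α i)² ≤ γ₀` the exponents add up to at most `N`, so the integrand is pointwise
bounded by `(∏ i, γ₀ / (N lam i)) * exp N` (`prod_sq_le`). The biased measure is a probability
measure, so the same constant bounds `M₂ γ₀`; the asymptotic claims follow since this constant is a
multiple of `γ₀ ^ N`.
-/

open MeasureTheory ProbabilityTheory Finset Real Filter Asymptotics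

/-- The squared ratio of the standard Gaussian density to the Gaussian density with mean `-a` and
standard deviation `s`, bounded by dropping the factor `exp (-x²) ≤ 1`. -/
lemma sq_density_ratio_le (s a x : ℝ) (hs : 0 < s) :
    ((1 / Real.sqrt (2 * Real.pi)) * Real.exp (-x ^ 2 / 2) /
      ((1 / (Real.sqrt (2 * Real.pi) * s)) * Real.exp (-(x + a) ^ 2 / (2 * s ^ 2)))) ^ 2
      ≤ s ^ 2 * Real.exp ((x + a) ^ 2 / s ^ 2) := by
  have hp : 0 < Real.sqrt (2 * Real.pi) := Real.sqrt_pos.2 (by positivity)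
  have h1 : (1 / Real.sqrt (2 * Real.pi)) * Real.exp (-x ^ 2 / 2) /
      ((1 / (Real.sqrt (2 * Real.pi) * s)) * Real.exp (-(x + a) ^ 2 / (2 * s ^ 2)))
      = s * Real.exp (-x ^ 2 / 2 - -(x + a) ^ 2 / (2 * s ^ 2)) := by
    rw [Real.exp_sub]
    field_simp
  rw [h1, mul_pow, ← Real.exp_nat_mul]
  have h2 : ((2 : ℕ) : ℝ) * (-x ^ 2 / 2 - -(x + a) ^ 2 / (2 * s ^ 2))
      = -x ^ 2 + (x + a) ^ 2 / s ^ 2 := by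
    push_cast
    field_simp
    ring
  rw [h2]
  gcongr
  nlinarith [sq_nonneg x]

lemma prod_sq_le (N : ℕ) (hN : 1 ≤ N) (lam : Fin N → ℝ) (hlam : ∀ i, 0 < lam i)
    (α z : Fin N → ℝ) (g : ℝ) (hg : 0 < g) (r : Fin N → ℝ)
    (hr : ∀ i, r i ^ 2 ≤ g / (N * lam i) * Real.exp ((z i + α i) ^ 2 / (g / (N * lam i))))
    (hz : ∑ i, lam i * (z i + α i) ^ 2 ≤ g) :
    (∏ i, r i) ^ 2 ≤ (N : ℝ) ^ (-(N : ℤ)) * (∏ i, (lam i)⁻¹) * Real.exp N * g ^ N := by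
  have hN' : (0 : ℝ) < N := by exact_mod_cast hN
  have hsum : ∑ i, (z i + α i) ^ 2 / (g / (N * lam i)) ≤ N := by
    have : ∑ i, (z i + α i) ^ 2 / (g / (N * lam i))
        = N / g * ∑ i, lam i * (z i + α i) ^ 2 := by
      rw [Finset.mul_sum]
      refine Finset.sum_congr rfl fun i _ => ?_
      have := hlam i
      field_simp
    rw [this]
    calc N / g * ∑ i, lam i * (z i + α i) ^ 2 ≤ N / g * g := by gcongr
      _ = N := by field_simp
  have hprod : ∏ i, (g / (N * lam i)) = (N : ℝ) ^ (-(N : ℤ)) * (∏ i, (lam i)⁻¹) * g ^ N := by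
    have : ∀ i, g / (N * lam i) = (g * (N : ℝ)⁻¹) * (lam i)⁻¹ := fun i => by
      rw [div_eq_mul_inv, mul_inv]; ring
    simp_rw [this]
    rw [Finset.prod_mul_distrib, Finset.prod_const, Finset.card_univ, Fintype.card_fin,
      zpow_neg, zpow_natCast, mul_pow, inv_pow]
    ring
  rw [← Finset.prod_pow]
  calc ∏ i, r i ^ 2
      ≤ ∏ i, (g / (N * lam i) * Real.exp ((z i + α i) ^ 2 / (g / (N * lam i)))) :=
        Finset.prod_le_prod (fun i _ => sq_nonneg _) (fun i _ => hr i)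
    _ = (∏ i, (g / (N * lam i))) * Real.exp (∑ i, (z i + α i) ^ 2 / (g / (N * lam i))) := by
        rw [Finset.prod_mul_distrib, Real.exp_sum]
    _ ≤ (∏ i, (g / (N * lam i))) * Real.exp N := by
        have : 0 ≤ ∏ i, (g / (N * lam i)) :=
          Finset.prod_nonneg fun i _ => by have := hlam i; positivity
        gcongr
    _ = _ := by rw [hprod]; ring

/-- Scaled second-moment bound: with biasing variances
`σ i (γ₀)² = γ₀/(N lam i)`, for all `γ₀ > 0` one has
`γ₀^{-N} M₂(γ₀) ≤ N^{-N} (∏ i lam i⁻¹) e^N`; in particular `M₂(γ₀) → 0`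
as `γ₀ → 0⁺` at rate `O(γ₀^N)`. -/
theorem scaled_second_moment_bound
    (N : ℕ) (hN : 1 ≤ N)
    (lam : Fin N → ℝ) (hlam : ∀ i, 0 < lam i) (α : Fin N → ℝ)
    (σ : ℝ → Fin N → ℝ) (hσ : ∀ γ₀ i, σ γ₀ i = Real.sqrt (γ₀ / (N * lam i)))
    (f : ℝ → ℝ) (hf : ∀ x, f x = (1 / Real.sqrt (2 * Real.pi)) * Real.exp (-x ^ 2 / 2))
    (fstar : ℝ → Fin N → ℝ → ℝ)
    (hfstar : ∀ γ₀ i x, fstar γ₀ i x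
      = (1 / (Real.sqrt (2 * Real.pi) * σ γ₀ i))
          * Real.exp (-(x + α i) ^ 2 / (2 * σ γ₀ i ^ 2)))
    (L : ℝ → (Fin N → ℝ) → ℝ)
    (hL : ∀ γ₀ z, L γ₀ z = ∏ i, f (z i) / fstar γ₀ i (z i))
    (M₂ : ℝ → ℝ)
    (hM₂ : ∀ γ₀, M₂ γ₀ = ∫ z : Fin N → ℝ,
        Set.indicator {y : Fin N → ℝ | ∑ i, lam i * (y i + α i) ^ 2 ≤ γ₀}
          (fun y => L γ₀ y ^ 2) z
        ∂(Measure.pi fun i : Fin N => gaussianReal (-α i) ((σ γ₀ i ^ 2).toNNReal))) :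
    (∀ γ₀ : ℝ, 0 < γ₀ →
      γ₀ ^ (-(N : ℤ)) * M₂ γ₀ ≤ (N : ℝ) ^ (-(N : ℤ)) * (∏ i, (lam i)⁻¹) * Real.exp N)
    ∧ M₂ =O[nhdsWithin 0 (Set.Ioi 0)] (fun γ₀ : ℝ => γ₀ ^ N)
    ∧ Filter.Tendsto M₂ (nhdsWithin 0 (Set.Ioi 0)) (nhds 0) := by
  set C : ℝ := (N : ℝ) ^ (-(N : ℤ)) * (∏ i, (lam i)⁻¹) * Real.exp N with hC
  have hN' : (0 : ℝ) < N := by exact_mod_cast hN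
  have hC0 : 0 ≤ C := by
    have : 0 ≤ ∏ i, (lam i)⁻¹ := Finset.prod_nonneg fun i _ => (inv_pos.2 (hlam i)).le
    positivity
  have key : ∀ γ₀ : ℝ, 0 < γ₀ → ‖M₂ γ₀‖ ≤ C * γ₀ ^ N := by
    intro g hg
    rw [hM₂]
    refine (norm_integral_le_of_norm_le_const (C := C * g ^ N)
      (Filter.Eventually.of_forall fun z => ?_)).trans_eq (by simp)
    by_cases hz : z ∈ {y : Fin N → ℝ | ∑ i, lam i * (y i + α i) ^ 2 ≤ g}
    · rw [Set.indicator_of_mem hz, Real.norm_of_nonneg (sq_nonneg _), hL]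
      refine prod_sq_le N hN lam hlam α z g hg _ (fun i => ?_) hz
      have hpos : 0 < g / (N * lam i) := by have := hlam i; positivity
      have hs : 0 < σ g i := by rw [hσ]; exact Real.sqrt_pos.2 hpos
      have hs2 : σ g i ^ 2 = g / (N * lam i) := by rw [hσ, Real.sq_sqrt hpos.le]
      rw [hf, hfstar, ← hs2]
      exact sq_density_ratio_le _ _ _ hs
    · rw [Set.indicator_of_notMem hz, norm_zero]
      positivity
  have hO : M₂ =O[nhdsWithin 0 (Set.Ioi 0)] (fun γ₀ : ℝ => γ₀ ^ N) := by
    refine IsBigO.of_bound C ?_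
    filter_upwards [self_mem_nhdsWithin] with g hg
    have hg : 0 < g := hg
    rw [Real.norm_of_nonneg (by positivity : 0 ≤ g ^ N)]
    exact key g hg
  refine ⟨fun g hg => ?_, hO, hO.trans_tendsto ?_⟩
  · rw [zpow_neg, zpow_natCast, inv_mul_le_iff₀ (by positivity), mul_comm]
    exact (le_abs_self _).trans (key g hg)
  · have h : Filter.Tendsto (fun γ₀ : ℝ => γ₀ ^ N) (nhds 0) (nhds ((0 : ℝ) ^ N)) :=
      (continuous_pow N).tendsto 0
    rw [zero_pow (by omega)] at h
    exact h.mono_left nhdsWithin_le_nhds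
end
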